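/- Let β and γ be real numbers with (β, γ) ∈ Γ. Then for every real R ≠ 0 and every real ε > 0, some real number strictly between e^{−ε}·R and e^{ε}·R is realizable for the parameters β and γ. In particular, the set of realizable ratios is dense in ℝ. -/

import Mathlib

open scoped BigOperators

/-- A finite undirected multigraph (self-loops and parallel edges permitted),
with vertices `Fin n` and edges given as a multiset of (ordered representatives of)
unordered pairs of vertices.  Since the edge weight below is symmetric, the
orientation of each pair is immaterial. -/
structure MultiGraph where
  n : ℕ
  edges : Multiset (Fin n × Fin n)

/-- The edge interaction: `A₀₀ = β`, `A₀₁ = A₁₀ = 1`, `A₁₁ = γ`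
(spin `false` = 0, spin `true` = 1). -/
def edgeW (β γ : ℝ) (i j : Bool) : ℝ :=
  if i = j then (if i then γ else β) else 1

/-- `[Z_{G,v}]_i` : the partition function (no external fields) restricted to
spin configurations with `σ v = i`. -/
def Zvert (β γ : ℝ) (G : MultiGraph) (v : Fin G.n) (i : Bool) : ℝ :=
  ∑ σ : Fin G.n → Bool,
    if σ v = i then (G.edges.map fun e => edgeW β γ (σ e.1) (σ e.2)).prod else 0

/-- A real number `r` is realizable for the parameters `β, γ` if some graph `G`
and vertex `v` satisfy `[Z_{G,v}]₀ ≠ 0` and `[Z_{G,v}]₁ / [Z_{G,v}]₀ = r`. -/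
def Realizable (β γ r : ℝ) : Prop :=
  ∃ (G : MultiGraph) (v : Fin G.n),
    Zvert β γ G v false ≠ 0 ∧ Zvert β γ G v true / Zvert β γ G v false = r

/-!
Realizable ratios form a multiplicative monoid (glue two graphs at their roots), and joining a new
root by an edge to the old one turns a ratio `x` into `(1 + γ x) / (β + x)`; so the closure `C` of
the set of realizable ratios is a closed submonoid of `ℝ` invariant under this Möbius map. If `C`
contains some `c` with `1 < |c|`, then the powers of `c` tend to infinity and their images
accumulate at `γ`. If `C` also contains some `d ≠ 0` with `|d| < 1`, then the logarithms `log |x|`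
of the nonzero `x` in `C` lie in a closed additive monoid with elements of both signs; by
Dirichlet's approximation theorem such a monoid is a group, and having an accumulation point it is
all of `ℝ`. As `γ < 0` this gives `C = ℝ`. Suitable `c` and `d` exist everywhere in `Γ`.
-/

section RootedGraph

lemma sum_option_arrow {V α M : Type*} [Fintype V] [DecidableEq V] [Fintype α]
    [AddCommMonoid M] (F : (Option V → α) → M) :
    ∑ σ, F σ = ∑ a : α, ∑ τ : V → α, F fun o => o.elim a τ := by
  rw [← Equiv.piOptionEquivProd.symm.sum_comp, Fintype.sum_prod_type]
  refine Finset.sum_congr rfl fun a _ => Finset.sum_congr rfl fun τ _ => congrArg F ?_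
  funext o
  cases o <;> rfl

/-- A multigraph on the vertices `Option V` with root `none`. With this encoding gluing two graphs
at their roots needs no quotient: the other vertices form a disjoint union. -/
structure RootedGraph (V : Type*) where
  edges : Multiset (Option V × Option V)

namespace RootedGraph

variable {V W : Type*}

/-- The graph consisting of the root alone. -/
def point : RootedGraph Empty := ⟨0⟩

/-- `G` with a self-loop added at the root. -/
def addLoop (G : RootedGraph V) : RootedGraph V := ⟨(none, none) ::ₘ G.edges⟩

/-- `G` with a new root, joined by an edge to the old one. -/
def addRoot (G : RootedGraph V) : RootedGraph (Option V) :=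
  ⟨(none, some none) ::ₘ G.edges.map (Prod.map some some)⟩

/-- The union of `G` and `H` with their roots identified. -/
def glue (G : RootedGraph V) (H : RootedGraph W) : RootedGraph (V ⊕ W) :=
  ⟨G.edges.map (Prod.map (Option.map Sum.inl) (Option.map Sum.inl)) +
    H.edges.map (Prod.map (Option.map Sum.inr) (Option.map Sum.inr))⟩

variable [Fintype V] [DecidableEq V] [Fintype W] [DecidableEq W] (β γ : ℝ)

/-- The partition function of a rooted graph restricted to configurations with spin `i` at the root,
the analogue of `Zvert`. -/
def weight (G : RootedGraph V) (i : Bool) : ℝ :=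
  ∑ τ : V → Bool, (G.edges.map fun e => edgeW β γ (e.1.elim i τ) (e.2.elim i τ)).prod

lemma weight_point (i : Bool) : point.weight β γ i = 1 := by
  simp [point, weight]

lemma weight_addLoop (G : RootedGraph V) (i : Bool) :
    G.addLoop.weight β γ i = edgeW β γ i i * G.weight β γ i := by
  simp [addLoop, weight, Finset.mul_sum]

lemma weight_addRoot (G : RootedGraph V) (i : Bool) :
    G.addRoot.weight β γ i =
      edgeW β γ i false * G.weight β γ false + edgeW β γ i true * G.weight β γ true := by
  simp only [addRoot, weight]
  rw [sum_option_arrow, Fintype.sum_bool, add_comm, Finset.mul_sum, Finset.mul_sum]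
  simp [Multiset.map_map, ← Finset.mul_sum, Function.comp_def]

lemma weight_glue (G : RootedGraph V) (H : RootedGraph W) (i : Bool) :
    (G.glue H).weight β γ i = G.weight β γ i * H.weight β γ i := by
  have elim_map_inl (τ : V → Bool) (τ' : W → Bool) (o : Option V) :
      (o.map Sum.inl).elim i (Sum.elim τ τ') = o.elim i τ := by cases o <;> rfl
  have elim_map_inr (τ : V → Bool) (τ' : W → Bool) (o : Option W) :
      (o.map Sum.inr).elim i (Sum.elim τ τ') = o.elim i τ' := by cases o <;> rfl
  simp only [glue, weight]
  rw [← (Equiv.sumArrowEquivProdArrow V W Bool).symm.sum_comp, Fintype.sum_prod_type,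
    Finset.sum_mul_sum]
  simp [Equiv.sumArrowEquivProdArrow, Multiset.map_map, elim_map_inl, elim_map_inr]

lemma Zvert_map_equiv {n : ℕ} (G : RootedGraph V) (e : Option V ≃ Fin n) (i : Bool) :
    Zvert β γ ⟨n, G.edges.map (Prod.map e e)⟩ (e none) i = G.weight β γ i := by
  simp only [Zvert, weight]
  rw [← (e.arrowCongr (Equiv.refl Bool)).sum_comp, sum_option_arrow]
  simp [Multiset.map_map]

variable {β γ}

lemma realizable_weight_div (G : RootedGraph V) (hG : G.weight β γ false ≠ 0) :
    Realizable β γ (G.weight β γ true / G.weight β γ false) := by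
  simp only [← G.Zvert_map_equiv β γ (Fintype.equivFin (Option V))] at hG ⊢
  exact ⟨⟨_, _⟩, _, hG, rfl⟩

end RootedGraph

end RootedGraph

section Realizable

variable {β γ x y : ℝ}

lemma Realizable.exists_rootedGraph (hx : Realizable β γ x) :
    ∃ (n : ℕ) (G : RootedGraph (Fin n)),
      G.weight β γ false ≠ 0 ∧ G.weight β γ true / G.weight β γ false = x := by
  obtain ⟨⟨_ | n, E⟩, v, hG⟩ := hx
  · exact v.elim0
  let e : Option (Fin n) ≃ Fin (n + 1) := (finSuccEquiv' v).symm
  let G : RootedGraph (Fin n) := ⟨E.map (Prod.map e.symm e.symm)⟩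
  have map_edges : G.edges.map (Prod.map e e) = E := by
    simp [G, Multiset.map_map, Prod.map_map]
  have weight_eq (i : Bool) : G.weight β γ i = Zvert β γ ⟨n + 1, E⟩ v i := by
    rw [← G.Zvert_map_equiv β γ e i, map_edges]
    simp only [e, finSuccEquiv'_symm_none]
  exact ⟨n, G, by simpa only [weight_eq] using hG⟩

lemma realizable_one (β γ : ℝ) : Realizable β γ 1 := by
  simpa [RootedGraph.weight_point] using
    RootedGraph.point.realizable_weight_div (β := β) (γ := γ) (by simp [RootedGraph.weight_point])

lemma realizable_div (hβ : β ≠ 0) : Realizable β γ (γ / β) := by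
  have weight_eq (i : Bool) :
      RootedGraph.point.addLoop.weight β γ i = if i then γ else β := by
    simp [RootedGraph.weight_addLoop, RootedGraph.weight_point, edgeW]
  simpa [weight_eq] using
    RootedGraph.point.addLoop.realizable_weight_div (β := β) (γ := γ) (by simpa [weight_eq])

lemma realizable_zero_left (hγ : γ ≠ 0) : Realizable 0 γ γ := by
  have weight_eq (i : Bool) :
      RootedGraph.point.addLoop.addRoot.weight 0 γ i = if i then γ * γ else γ := by
    cases i <;>
      simp [RootedGraph.weight_addRoot, RootedGraph.weight_addLoop, RootedGraph.weight_point, edgeW]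
  simpa [weight_eq, hγ] using
    RootedGraph.point.addLoop.addRoot.realizable_weight_div (β := 0) (γ := γ) (by simpa [weight_eq])

lemma Realizable.mul (hx : Realizable β γ x) (hy : Realizable β γ y) : Realizable β γ (x * y) := by
  obtain ⟨m, G, hG, rfl⟩ := hx.exists_rootedGraph
  obtain ⟨n, H, hH, rfl⟩ := hy.exists_rootedGraph
  have glue_ne : (G.glue H).weight β γ false ≠ 0 := by
    simpa only [RootedGraph.weight_glue] using mul_ne_zero hG hH
  simpa only [RootedGraph.weight_glue, div_mul_div_comm] using
    (G.glue H).realizable_weight_div glue_ne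

/-- The effect of `RootedGraph.addRoot` on the ratio of the two weights: the Möbius map of the
interaction matrix. At its pole `-β` it takes the junk value `0`. -/
noncomputable def edgeRatio (β γ x : ℝ) : ℝ := (1 + γ * x) / (β + x)

lemma Realizable.edgeRatio (hx : Realizable β γ x) (hne : x ≠ -β) :
    Realizable β γ (edgeRatio β γ x) := by
  obtain ⟨n, G, hG, rfl⟩ := hx.exists_rootedGraph
  set a := G.weight β γ false with ha
  set b := G.weight β γ true with hb
  have weight_false : G.addRoot.weight β γ false = (β + b / a) * a := by
    simp [RootedGraph.weight_addRoot, edgeW, ← ha, ← hb, add_mul, hG]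
  have weight_true : G.addRoot.weight β γ true = (1 + γ * (b / a)) * a := by
    simp [RootedGraph.weight_addRoot, edgeW, ← ha, ← hb, add_mul, mul_assoc, hG]
  have pole_ne : β + b / a ≠ 0 := fun h => hne (eq_neg_of_add_eq_zero_right h)
  have := G.addRoot.realizable_weight_div (weight_false ▸ mul_ne_zero pole_ne hG)
  rwa [weight_true, weight_false, mul_div_mul_right _ _ hG] at this

end Realizable

section ClosedSubmonoid

open Filter Topology

lemma mem_of_isClosed_of_accPt {X : Type*} [TopologicalSpace X] {s : Set X} (hs : IsClosed s)
    {z : X} (hz : AccPt z (𝓟 s)) : z ∈ s :=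
  hs.closure_subset (mem_closure_iff_clusterPt.2 hz.clusterPt)

-- If `k (x / y)` is within `δ` of the integer `-m`, then `(k - 1) x + m y` is within `δ |y|` of
-- `-x`.
lemma addSubmonoid_neg_mem_of_mul_neg {P : AddSubmonoid ℝ} (hP : IsClosed (P : Set ℝ))
    {x y : ℝ} (hx : x ∈ P) (hy : y ∈ P) (hxy : x * y < 0) : -x ∈ P := by
  have hy0 : y ≠ 0 := right_ne_zero_of_mul hxy.ne
  have ratio_neg : x / y < 0 := by
    rw [← mul_div_mul_right x y hy0]
    exact div_neg_of_neg_of_pos hxy (mul_self_pos.2 hy0)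
  rw [← SetLike.mem_coe, ← hP.closure_eq, Metric.mem_closure_iff]
  intro ε hε
  obtain ⟨n, hn⟩ := exists_nat_one_div_lt (div_pos hε (abs_pos.2 hy0))
  obtain ⟨k, hk, -, hround⟩ := Real.exists_nat_abs_mul_sub_round_le (x / y) n.succ_pos
  have round_nonpos : round (k * (x / y)) ≤ 0 := by
    have round_lt : (round (k * (x / y)) : ℝ) < 1 := by
      linarith [round_le_add_half (k * (x / y)),
        mul_neg_of_pos_of_neg (Nat.cast_pos.2 hk) ratio_neg]
    exact Int.lt_add_one_iff.1 (by exact_mod_cast round_lt)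
  obtain ⟨m, hm⟩ := Int.exists_eq_neg_ofNat round_nonpos
  obtain ⟨k, rfl⟩ := Nat.exists_eq_add_one.2 hk
  rw [hm] at hround
  refine ⟨k • x + m • y, P.add_mem (P.nsmul_mem hx k) (P.nsmul_mem hy m), ?_⟩
  calc dist (-x) (k • x + m • y)
      = |((k + 1 : ℕ) * (x / y) - (-m : ℤ)) * y| := by
        rw [Real.dist_eq, ← abs_neg]
        congr 1
        simp only [nsmul_eq_mul]
        push_cast
        field_simp
        ring
    _ ≤ 1 / ((n + 1 : ℕ) + 1) * |y| := by rw [abs_mul]; gcongr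
    _ ≤ 1 / (n + 1) * |y| := by gcongr; simp
    _ < ε := (lt_div_iff₀ (abs_pos.2 hy0)).1 hn

lemma addSubmonoid_eq_top_of_accPt {P : AddSubmonoid ℝ} (hP : IsClosed (P : Set ℝ)) {a b z : ℝ}
    (ha : a ∈ P) (ha0 : 0 < a) (hb : b ∈ P) (hb0 : b < 0) (hz : AccPt z (𝓟 (P : Set ℝ))) :
    P = ⊤ := by
  have neg_mem (x : ℝ) (hx : x ∈ P) : -x ∈ P := by
    rcases lt_trichotomy x 0 with hx0 | rfl | hx0
    · exact addSubmonoid_neg_mem_of_mul_neg hP hx ha (mul_neg_of_neg_of_pos hx0 ha0)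
    · rwa [neg_zero]
    · exact addSubmonoid_neg_mem_of_mul_neg hP hx hb (mul_neg_of_pos_of_neg hx0 hb0)
  have hzP : z ∈ P := mem_of_isClosed_of_accPt hP hz
  let G : AddSubgroup ℝ := { P with neg_mem' := neg_mem _ }
  have dense : Dense (G : Set ℝ) := by
    refine G.dense_of_not_isolated_zero fun ε hε => ?_
    obtain ⟨y, ⟨hyε, hyP⟩, hyz⟩ := accPt_iff_nhds.1 hz _ (Metric.ball_mem_nhds z hε)
    have sub_mem : y - z ∈ G := G.sub_mem hyP hzP
    exact ⟨|y - z|, abs_mem_iff.2 sub_mem, abs_pos.2 (sub_ne_zero.2 hyz), hyε⟩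
  exact SetLike.coe_injective (hP.closure_eq.symm.trans dense.closure_eq)

lemma submonoid_zero_mem_of_abs_lt_one {C : Submonoid ℝ} (hC : IsClosed (C : Set ℝ)) {d : ℝ}
    (hd : d ∈ C) (hd1 : |d| < 1) : (0 : ℝ) ∈ C :=
  hC.mem_of_tendsto (tendsto_pow_atTop_nhds_zero_of_abs_lt_one hd1) (.of_forall (C.pow_mem hd))

/-- The half-logarithms `t = (log u) / 2` of the positive elements `u` of a submonoid. The factor
`2` makes `log |x|` an element for every nonzero `x` in the submonoid, whatever its sign. -/
def halfLog (C : Submonoid ℝ) : AddSubmonoid ℝ where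
  carrier := {t | Real.exp (2 * t) ∈ C}
  zero_mem' := by simp
  add_mem' hs ht := by
    simpa [mul_add, Real.exp_add] using C.mul_mem hs ht

lemma log_mem_halfLog {C : Submonoid ℝ} {x : ℝ} (hx : x ∈ C) (hx0 : x ≠ 0) :
    Real.log x ∈ halfLog C := by
  change Real.exp (2 * Real.log x) ∈ C
  rw [mul_comm, Real.exp_mul, Real.exp_log_eq_abs hx0, Real.rpow_two, sq_abs]
  exact C.pow_mem hx 2

lemma isClosed_halfLog {C : Submonoid ℝ} (hC : IsClosed (C : Set ℝ)) :
    IsClosed (halfLog C : Set ℝ) :=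
  hC.preimage (by fun_prop : Continuous fun t : ℝ => Real.exp (2 * t))

lemma submonoid_eq_top_of_accPt_neg {C : Submonoid ℝ} (hC : IsClosed (C : Set ℝ)) {c d z : ℝ}
    (hc : c ∈ C) (hc1 : 1 < |c|) (hd : d ∈ C) (hd0 : d ≠ 0) (hd1 : |d| < 1)
    (hz : AccPt z (𝓟 (C : Set ℝ))) (hz0 : z < 0) : C = ⊤ := by
  have hc0 : c ≠ 0 := abs_pos.1 (zero_lt_one.trans hc1)
  have halfLog_eq_top : halfLog C = ⊤ := by
    refine addSubmonoid_eq_top_of_accPt (isClosed_halfLog hC) (log_mem_halfLog hc hc0)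
      (Real.log_abs c ▸ Real.log_pos hc1) (log_mem_halfLog hd hd0)
      (Real.log_abs d ▸ Real.log_neg (abs_pos.2 hd0) hd1) (z := Real.log z) ?_
    rw [accPt_iff_frequently_nhdsNE] at hz ⊢
    refine ((Real.hasDerivAt_log hz0.ne).tendsto_nhdsNE (inv_ne_zero hz0.ne)).frequently ?_
    have eventually_ne_zero : ∀ᶠ y in 𝓝[≠] z, y ≠ 0 :=
      (eventually_ne_nhds hz0.ne).filter_mono nhdsWithin_le_nhds
    exact (hz.and_eventually eventually_ne_zero).mono fun y hy => log_mem_halfLog hy.1 hy.2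
  have pos_mem (x : ℝ) (hx : 0 < x) : x ∈ C := by
    have : Real.exp (2 * (Real.log x / 2)) ∈ C := halfLog_eq_top.ge (AddSubmonoid.mem_top _)
    rwa [mul_div_cancel₀ _ two_ne_zero, Real.exp_log hx] at this
  have hzC : z ∈ C := mem_of_isClosed_of_accPt hC hz
  refine eq_top_iff.2 fun x _ => ?_
  rcases lt_trichotomy x 0 with hx | rfl | hx
  · have := C.mul_mem hzC (pos_mem _ (div_pos_of_neg_of_neg hx hz0))
    rwa [mul_div_cancel₀ _ hz0.ne] at this
  · exact submonoid_zero_mem_of_abs_lt_one hC hd hd1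
  · exact pos_mem x hx

end ClosedSubmonoid

section EdgeRatio

open Filter Topology Bornology

variable {β γ : ℝ}

lemma continuousAt_edgeRatio {x : ℝ} (hx : x ≠ -β) : ContinuousAt (edgeRatio β γ) x :=
  ContinuousAt.div (by fun_prop) (by fun_prop) fun h => hx (eq_neg_of_add_eq_zero_right h)

lemma tendsto_edgeRatio_cobounded (hdet : β * γ ≠ 1) :
    Tendsto (edgeRatio β γ) (cobounded ℝ) (𝓝[≠] γ) := by
  have tendsto_inv : Tendsto (fun x : ℝ => (β + x)⁻¹) (cobounded ℝ) (𝓝[≠] 0) :=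
    tendsto_inv₀_cobounded'.comp (tendsto_const_add_cobounded β)
  have hasDerivAt_affine : HasDerivAt (fun t => γ + (1 - β * γ) * t) (1 - β * γ) 0 := by
    simpa using ((hasDerivAt_id (0 : ℝ)).const_mul (1 - β * γ)).const_add γ
  have tendsto_affine :=
    (hasDerivAt_affine.tendsto_nhdsNE (sub_ne_zero.2 hdet.symm)).comp tendsto_inv
  rw [mul_zero, add_zero] at tendsto_affine
  refine tendsto_affine.congr' ?_
  filter_upwards [eventually_ne_cobounded (-β)] with x hx
  have : β + x ≠ 0 := fun h => hx (eq_neg_of_add_eq_zero_right h)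
  simp only [Function.comp_apply, edgeRatio]
  field_simp
  ring

lemma accPt_of_one_lt_abs {C : Submonoid ℝ} (hdet : β * γ ≠ 1)
    (hedge : ∀ x ∈ C, x ≠ -β → edgeRatio β γ x ∈ C) {c : ℝ} (hc : c ∈ C) (hc1 : 1 < |c|) :
    AccPt γ (𝓟 (C : Set ℝ)) := by
  have tendsto_pow : Tendsto (fun n : ℕ => c ^ n) atTop (cobounded ℝ) := by
    rw [← tendsto_norm_atTop_iff_cobounded]
    simpa only [norm_pow, Real.norm_eq_abs] using tendsto_pow_atTop_atTop_of_one_lt hc1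
  rw [accPt_iff_frequently_nhdsNE]
  refine ((tendsto_edgeRatio_cobounded hdet).comp tendsto_pow).frequently (Eventually.frequently ?_)
  filter_upwards [tendsto_pow.eventually_ne_cobounded (-β)] with n hn
  exact hedge _ (C.pow_mem hc n) hn

end EdgeRatio

section RealizableClosure

open Filter Topology

/-- The closure of the set of realizable ratios, as a multiplicative submonoid of `ℝ`. -/
def realizableClosure (β γ : ℝ) : Submonoid ℝ :=
  Submonoid.topologicalClosure
    { carrier := {r | Realizable β γ r}
      one_mem' := realizable_one β γ
      mul_mem' := Realizable.mul }

variable {β γ x : ℝ}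

lemma isClosed_realizableClosure : IsClosed (realizableClosure β γ : Set ℝ) :=
  Submonoid.isClosed_topologicalClosure _

lemma Realizable.mem_realizableClosure (hx : Realizable β γ x) : x ∈ realizableClosure β γ :=
  subset_closure hx

lemma div_mem_realizableClosure (hβ : β ≠ 0) : γ / β ∈ realizableClosure β γ :=
  (realizable_div hβ).mem_realizableClosure

lemma edgeRatio_mem_realizableClosure (hx : x ∈ realizableClosure β γ) (hne : x ≠ -β) :
    edgeRatio β γ x ∈ realizableClosure β γ :=
  mem_closure_iff_frequently.2 <| (continuousAt_edgeRatio hne).frequently <|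
    ((mem_closure_iff_frequently.1 hx).and_eventually (eventually_ne_nhds hne)).mono
      fun _ hy => Realizable.edgeRatio hy.1 hy.2

lemma exists_mem_realizableClosure_one_lt_abs_of_add_neg (hβγ : γ < β) (hsum : β + γ < 0) :
    ∃ c ∈ realizableClosure β γ, 1 < |c| := by
  have hγ : γ < 0 := by linarith
  rcases eq_or_ne β 0 with rfl | hβ
  · refine ⟨edgeRatio 0 γ γ, edgeRatio_mem_realizableClosure
      (realizable_zero_left hγ.ne).mem_realizableClosure (by simpa using hγ.ne), ?_⟩
    rw [edgeRatio, zero_add, abs_div, one_lt_div (abs_pos.2 hγ.ne), abs_of_neg hγ,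
      abs_of_pos (by nlinarith : 0 < 1 + γ * γ)]
    nlinarith [sq_nonneg (γ + 1)]
  · refine ⟨γ / β, div_mem_realizableClosure hβ, ?_⟩
    rw [abs_div, one_lt_div (abs_pos.2 hβ), abs_of_neg hγ, abs_lt]
    constructor <;> linarith

lemma exists_mem_realizableClosure_abs_lt_one_of_add_neg (hβγ : γ < β) (hsum : -2 < β + γ)
    (hneg : β + γ < 0) (hdet : β * γ ≠ 1) {c : ℝ} (hc : c ∈ realizableClosure β γ)
    (hc1 : 1 < |c|) :
    ∃ d ∈ realizableClosure β γ, d ≠ 0 ∧ |d| < 1 := by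
  rcases lt_trichotomy γ (-1) with hγ | rfl | hγ
  · have hβ : 0 < β + 1 := by linarith
    refine ⟨edgeRatio β γ 1, edgeRatio_mem_realizableClosure (one_mem _) (by linarith), ?_⟩
    rw [edgeRatio, mul_one]
    refine ⟨div_ne_zero (by linarith) hβ.ne', ?_⟩
    rw [abs_div, abs_of_pos hβ, div_lt_one hβ, abs_lt]
    constructor <;> linarith
  · have c_sq : 1 < c ^ 2 := (one_lt_sq_iff_one_lt_abs c).2 hc1
    have hpole : 0 < β + c ^ 2 := by linarith
    refine ⟨edgeRatio β (-1) (c ^ 2),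
      edgeRatio_mem_realizableClosure (pow_mem hc 2) (by linarith), ?_⟩
    rw [edgeRatio]
    refine ⟨div_ne_zero (by linarith) hpole.ne', ?_⟩
    rw [abs_div, abs_of_pos hpole, div_lt_one hpole, abs_lt]
    constructor <;> linarith
  · have hγC : γ ∈ realizableClosure β γ :=
      mem_of_isClosed_of_accPt isClosed_realizableClosure <|
        accPt_of_one_lt_abs hdet (fun _ => edgeRatio_mem_realizableClosure) hc hc1
    exact ⟨γ, hγC, by linarith, abs_lt.2 ⟨hγ, by linarith⟩⟩

lemma exists_mem_realizableClosure_one_lt_abs_of_add_eq_zero (hβ : 0 < β) (hβ1 : β ≠ 1) :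
    ∃ c ∈ realizableClosure β (-β), 1 < |c| := by
  have neg_one_mem : -1 ∈ realizableClosure β (-β) := by
    simpa [neg_div, hβ.ne'] using div_mem_realizableClosure (γ := -β) hβ.ne'
  have hpole : β + -1 ≠ 0 := fun h => hβ1 (eq_of_sub_eq_zero h)
  refine ⟨edgeRatio β (-β) (-1),
    edgeRatio_mem_realizableClosure neg_one_mem (fun h => hβ1 (neg_inj.1 h).symm), ?_⟩
  rw [edgeRatio, neg_mul_neg, mul_one, abs_div, one_lt_div (abs_pos.2 hpole),
    abs_of_pos (by positivity : 0 < 1 + β), abs_lt]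
  constructor <;> linarith

lemma exists_mem_realizableClosure_abs_lt_one_of_add_eq_zero (hβ : 0 < β) (hβ1 : β ≠ 1) :
    ∃ d ∈ realizableClosure β (-β), d ≠ 0 ∧ |d| < 1 := by
  refine ⟨edgeRatio β (-β) 1,
    edgeRatio_mem_realizableClosure (one_mem _) (by linarith), ?_⟩
  have hpole : 0 < β + 1 := by positivity
  rw [edgeRatio, mul_one]
  refine ⟨div_ne_zero (fun h => hβ1 (by linarith)) hpole.ne', ?_⟩
  rw [abs_div, abs_of_pos hpole, div_lt_one hpole, abs_lt]
  constructor <;> linarith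

lemma abs_div_lt_one_of_add_pos (hγ : γ < 0) (hsum : 0 < β + γ) : |γ / β| < 1 := by
  have hβ : 0 < β := by linarith
  rw [abs_div, div_lt_one (abs_pos.2 hβ.ne'), abs_of_neg hγ, abs_of_pos hβ]
  linarith

lemma exists_mem_realizableClosure_abs_lt_one_of_add_pos (hγ : γ < 0) (hsum : 0 < β + γ) :
    ∃ d ∈ realizableClosure β γ, d ≠ 0 ∧ |d| < 1 := by
  have hβ : β ≠ 0 := by linarith
  exact ⟨γ / β, div_mem_realizableClosure hβ, div_ne_zero hγ.ne hβ,
    abs_div_lt_one_of_add_pos hγ hsum⟩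

lemma exists_mem_realizableClosure_one_lt_abs_of_add_pos (hγ : γ < 0) (hsum : 0 < β + γ)
    (hsum1 : β + γ < 1) :
    ∃ c ∈ realizableClosure β γ, 1 < |c| := by
  have hβ : 0 < β := by linarith
  have hd : γ / β ∈ realizableClosure β γ := div_mem_realizableClosure hβ.ne'
  have hd1 : |γ / β| < 1 := abs_div_lt_one_of_add_pos hγ hsum
  rcases lt_or_ge β 1 with hβ1 | hβ1
  · refine ⟨edgeRatio β γ 0, edgeRatio_mem_realizableClosure
      (submonoid_zero_mem_of_abs_lt_one isClosed_realizableClosure hd hd1) (by linarith), ?_⟩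
    rw [edgeRatio, mul_zero, add_zero, add_zero, abs_of_pos (by positivity)]
    exact one_lt_one_div hβ hβ1
  · have hpole : -1 < γ / β := (abs_lt.1 hd1).1
    refine ⟨edgeRatio β γ (γ / β), edgeRatio_mem_realizableClosure hd (by linarith), ?_⟩
    have hden : 0 < β + γ / β := by linarith
    have num_sub_den : 1 + γ * (γ / β) - (β + γ / β) = (β - γ) * (1 - (β + γ)) / β := by
      field_simp
      ring
    have factor_pos : 0 < (β - γ) * (1 - (β + γ)) / β :=
      div_pos (mul_pos (by linarith) (by linarith)) hβ
    have one_lt : 1 < edgeRatio β γ (γ / β) := by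
      rw [edgeRatio, one_lt_div hden]
      linarith
    exact one_lt.trans_le (le_abs_self _)

lemma mul_ne_one_of_abs_add_lt_two (h : |β + γ| < 2) : β * γ ≠ 1 := fun hmul => by
  have sq_add_lt : (β + γ) ^ 2 < 2 ^ 2 := sq_lt_sq.2 (by rwa [abs_two])
  have sq_sub_neg : (β - γ) ^ 2 < 0 := calc
    (β - γ) ^ 2 = (β + γ) ^ 2 - 2 ^ 2 := by linear_combination -4 * hmul
    _ < 0 := sub_neg.2 sq_add_lt
  exact (sq_nonneg _).not_gt sq_sub_neg

lemma realizableClosure_eq_top (hβγ : γ < β) (hsum : -2 < β + γ) (hsum1 : β + γ < 1)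
    (hγ : γ < 0) (hne : (β, γ) ≠ (1, -1)) : realizableClosure β γ = ⊤ := by
  have hdet : β * γ ≠ 1 := mul_ne_one_of_abs_add_lt_two (abs_lt.2 ⟨hsum, by linarith⟩)
  obtain ⟨⟨c, hc, hc1⟩, d, hd, hd0, hd1⟩ : (∃ c ∈ realizableClosure β γ, 1 < |c|) ∧
      ∃ d ∈ realizableClosure β γ, d ≠ 0 ∧ |d| < 1 := by
    rcases lt_trichotomy (β + γ) 0 with hneg | hzero | hpos
    · obtain ⟨c, hc, hc1⟩ := exists_mem_realizableClosure_one_lt_abs_of_add_neg hβγ hneg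
      exact ⟨⟨c, hc, hc1⟩,
        exists_mem_realizableClosure_abs_lt_one_of_add_neg hβγ hsum hneg hdet hc hc1⟩
    · obtain rfl : γ = -β := eq_neg_of_add_eq_zero_right hzero
      have hβ : 0 < β := neg_lt_zero.1 hγ
      have hβ1 : β ≠ 1 := by
        rintro rfl
        exact hne rfl
      exact ⟨exists_mem_realizableClosure_one_lt_abs_of_add_eq_zero hβ hβ1,
        exists_mem_realizableClosure_abs_lt_one_of_add_eq_zero hβ hβ1⟩
    · exact ⟨exists_mem_realizableClosure_one_lt_abs_of_add_pos hγ hpos hsum1,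
        exists_mem_realizableClosure_abs_lt_one_of_add_pos hγ hpos⟩
  exact submonoid_eq_top_of_accPt_neg isClosed_realizableClosure hc hc1 hd hd0 hd1
    (accPt_of_one_lt_abs hdet (fun _ => edgeRatio_mem_realizableClosure) hc hc1) hγ

end RealizableClosure

/-- For `(β, γ) ∈ Γ = {β > γ, −2 < β + γ < 1, γ < 0} \ {(1,−1)}`: for every real
`R ≠ 0` and every `ε > 0`, some real number strictly between `e^{−ε}R` and `e^{ε}R`
is realizable.  In particular the set of realizable ratios is dense in `ℝ`. -/
theorem stmt14 (β γ : ℝ) (h1 : β > γ) (h2 : -2 < β + γ) (h3 : β + γ < 1)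
    (h4 : γ < 0) (h5 : (β, γ) ≠ ((1 : ℝ), (-1 : ℝ))) :
    (∀ R : ℝ, R ≠ 0 → ∀ ε : ℝ, 0 < ε →
      ∃ r : ℝ, min (Real.exp (-ε) * R) (Real.exp ε * R) < r ∧
        r < max (Real.exp (-ε) * R) (Real.exp ε * R) ∧ Realizable β γ r) ∧
    Dense {r : ℝ | Realizable β γ r} := by
  have hdense : Dense {r : ℝ | Realizable β γ r} :=
    dense_iff_closure_eq.2 (congrArg SetLike.coe (realizableClosure_eq_top h1 h2 h3 h4 h5))
  refine ⟨fun R hR ε hε => ?_, hdense⟩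
  have endpoints_ne : Real.exp (-ε) * R ≠ Real.exp ε * R := fun h => by
    have := Real.exp_injective (mul_right_cancel₀ hR h)
    linarith
  obtain ⟨r, hr, hlower, hupper⟩ := hdense.exists_between (min_lt_max.2 endpoints_ne)
  exact ⟨r, hlower, hupper, hr⟩
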